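/- Let G be a finite connected simple graph with a cut-partition 𝒞 such that no shortest path in G uses two edges of the same cut C ∈ 𝒞. For a vertex v, let h_v be the minimum cardinality of a set H ⊆ V(G) such that for every cut C ∈ 𝒞, H contains a vertex of the side of C not containing v. Then the hull number of G satisfies hn(G) = (min over all vertices v of h_v) + 1. -/

import Mathlib

/-- A set of vertices is (geodesically) convex. -/
def GConvex {V : Type*} (G : SimpleGraph V) (S : Set V) : Prop :=
  ∀ u ∈ S, ∀ w ∈ S, ∀ x : V, G.dist u x + G.dist x w = G.dist u w → x ∈ S

/-- The convex hull of a set of vertices: the smallest convex set containing it. -/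
def GConvexHull {V : Type*} (G : SimpleGraph V) (S : Set V) : Set V :=
  ⋂₀ {T : Set V | GConvex G T ∧ S ⊆ T}

/-- The hull number: the minimum cardinality of a hull set. -/
noncomputable def hullNumber {V : Type*} (G : SimpleGraph V) : ℕ :=
  sInf {n : ℕ | ∃ H : Set V, GConvexHull G H = Set.univ ∧ H.ncard = n}

/-- A cut of a connected simple graph: an inclusion-minimal set of edges whose
removal disconnects the graph. -/
def IsCut {V : Type*} (G : SimpleGraph V) (C : Set (Sym2 V)) : Prop :=
  C ⊆ G.edgeSet ∧ ¬ (G.deleteEdges C).Connected ∧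
    ∀ C' : Set (Sym2 V), C' ⊂ C → (G.deleteEdges C').Connected

/-- A cut-partition: a set of cuts partitioning the edge set. -/
def IsCutPartition {V : Type*} (G : SimpleGraph V) (𝒞 : Set (Set (Sym2 V))) : Prop :=
  (∀ C ∈ 𝒞, IsCut G C) ∧ 𝒞.PairwiseDisjoint id ∧ ⋃₀ 𝒞 = G.edgeSet

/-- A side of a cut `C`: the vertex set of a connected component of `G` minus `C`. -/
def IsSide {V : Type*} (G : SimpleGraph V) (C : Set (Sym2 V)) (S : Set V) : Prop :=
  ∃ x : V, S = {y : V | (G.deleteEdges C).Reachable y x}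

open Classical in
/-- The number of edges of a walk (with multiplicity) belonging to a given edge set. -/
noncomputable def cutUse {V : Type*} (G : SimpleGraph V) {u w : V} (p : G.Walk u w)
    (C : Set (Sym2 V)) : ℕ :=
  p.edges.countP fun e => decide (e ∈ C)

/-- `oneSidedHitting G 𝒞 v` is `h_v`: the minimum cardinality of a set `H` of vertices
hitting, for every cut `C ∈ 𝒞`, the side of `C` not containing `v`. -/
noncomputable def oneSidedHitting {V : Type*} (G : SimpleGraph V)
    (𝒞 : Set (Set (Sym2 V))) (v : V) : ℕ :=
  sInf {n : ℕ | ∃ H : Set V,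
    (∀ C ∈ 𝒞, ∀ S : Set V, IsSide G C S → v ∉ S → (S ∩ H).Nonempty) ∧ H.ncard = n}

section CutUse

variable {V : Type*} {G : SimpleGraph V} {C : Set (Sym2 V)} {𝒞 : Set (Set (Sym2 V))}

open Classical in
theorem cutUse_cons {u x w : V} (h : G.Adj u x) (p : G.Walk x w) (C : Set (Sym2 V)) :
    cutUse G (.cons h p) C = cutUse G p C + if s(u, x) ∈ C then 1 else 0 := by
  simp [cutUse, List.countP_cons]

theorem cutUse_append {u x w : V} (p : G.Walk u x) (q : G.Walk x w) (C : Set (Sym2 V)) :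
    cutUse G (p.append q) C = cutUse G p C + cutUse G q C := by
  simp [cutUse, SimpleGraph.Walk.edges_append]

/-- Every vertex lies on the side of one of the two ends of a given edge of a cut. -/
theorem IsCut.reachable_or (hC : IsCut G C) {a b : V} (hab : s(a, b) ∈ C) (x : V) :
    (G.deleteEdges C).Reachable x a ∨ (G.deleteEdges C).Reachable x b := by
  have step {x z : V} (p : (G.deleteEdges (C \ {s(a, b)})).Walk x z)
      (hz : (G.deleteEdges C).Reachable z a ∨ (G.deleteEdges C).Reachable z b) :
      (G.deleteEdges C).Reachable x a ∨ (G.deleteEdges C).Reachable x b := by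
    induction p with
    | nil => exact hz
    | @cons u y w h p ih =>
      rw [SimpleGraph.deleteEdges_adj] at h
      by_cases he : s(u, y) = s(a, b)
      · rcases Sym2.eq_iff.1 he with ⟨rfl, -⟩ | ⟨rfl, -⟩
        · exact Or.inl .rfl
        · exact Or.inr .rfl
      · have huy : (G.deleteEdges C).Reachable u y := by
          refine SimpleGraph.Adj.reachable ?_
          rw [SimpleGraph.deleteEdges_adj]
          exact ⟨h.1, fun hm => h.2 ⟨hm, he⟩⟩
        exact (ih hz).imp huy.trans huy.trans
  obtain ⟨p⟩ := (hC.2.2 _ (Set.sdiff_singleton_ssubset.2 hab)).preconnected x a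
  exact step p (Or.inl .rfl)

/-- The ends of an edge of a cut lie on different sides. -/
theorem IsCut.not_reachable (hC : IsCut G C) {a b : V} (hab : s(a, b) ∈ C) :
    ¬ (G.deleteEdges C).Reachable a b := by
  intro h
  have key (x : V) : (G.deleteEdges C).Reachable x b :=
    (hC.reachable_or hab x).elim (fun hx => hx.trans h) id
  refine hC.2.1 ?_
  rw [SimpleGraph.connected_iff]
  exact ⟨fun x y => (key x).trans (key y).symm, ⟨a⟩⟩

/-- A walk joins two vertices of the same side of a cut iff it crosses the cut evenly often. -/
theorem IsCut.even_cutUse_iff (hC : IsCut G C) {u w : V} (p : G.Walk u w) :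
    Even (cutUse G p C) ↔ (G.deleteEdges C).Reachable u w := by
  induction p with
  | nil => simp [cutUse]
  | @cons u x w h p ih =>
    rw [cutUse_cons]
    by_cases he : s(u, x) ∈ C
    · have hux := hC.not_reachable he
      rw [if_pos he, Nat.even_add_one, ih]
      constructor
      · intro hxw
        refine ((hC.reachable_or he w).resolve_right fun hwx => hxw hwx.symm).symm
      · exact fun huw hxw => hux (huw.trans hxw.symm)
    · have hux : (G.deleteEdges C).Reachable u x := by
        refine SimpleGraph.Adj.reachable ?_
        rw [SimpleGraph.deleteEdges_adj]
        exact ⟨h, he⟩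
      rw [if_neg he, add_zero, ih]
      exact ⟨hux.trans, hux.symm.trans⟩

open Classical in
theorem IsCutPartition.length_eq_sum [Fintype V] (hpart : IsCutPartition G 𝒞) {u w : V}
    (p : G.Walk u w) : p.length = ∑ C ∈ 𝒞.toFinset, cutUse G p C := by
  induction p with
  | nil => simp [cutUse]
  | @cons u x w h p ih =>
    have he : s(u, x) ∈ ⋃₀ 𝒞 := by rw [hpart.2.2]; exact h
    obtain ⟨C, hC, heC⟩ := he
    simp only [cutUse_cons, Finset.sum_add_distrib, SimpleGraph.Walk.length_cons, ← ih]
    rw [Finset.sum_eq_single C, if_pos heC]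
    · intro D hD hDC
      refine if_neg fun heD => ?_
      exact Set.disjoint_left.1 (hpart.2.1 (by simpa using hD) hC hDC) heD heC
    · intro hn
      exact absurd (by simpa using hC) hn

/-- The geodesic distance is the number of cuts separating two vertices. -/
theorem IsCutPartition.dist_eq_sum [Fintype V] (hpart : IsCutPartition G 𝒞) (hconn : G.Connected)
    (hgeo : ∀ (u w : V) (p : G.Walk u w), p.length = G.dist u w → ∀ C ∈ 𝒞, cutUse G p C ≤ 1)
    [Fintype 𝒞] [∀ u w C, Decidable ((SimpleGraph.deleteEdges G C).Reachable u w)] (u w : V) :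
    G.dist u w = ∑ C ∈ 𝒞.toFinset, if (G.deleteEdges C).Reachable u w then 0 else 1 := by
  obtain ⟨p, hp⟩ := hconn.exists_walk_length_eq_dist u w
  rw [← hp, hpart.length_eq_sum p]
  convert Finset.sum_congr rfl fun C hC => ?_
  have hC : C ∈ 𝒞 := by simpa using hC
  have h1 := hgeo u w p hp C hC
  have h2 := (hpart.1 C hC).even_cutUse_iff p
  split_ifs with h
  · have := h2.2 h
    interval_cases hk : cutUse G p C
    · rfl
    · simp at this
  · have := mt h2.1 h
    interval_cases hk : cutUse G p C
    · simp at this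
    · rfl

/-- Crossing an edge of a cut away from the side of `w` increases the distance to `w` by one. -/
theorem IsCutPartition.dist_succ [Fintype V] (hpart : IsCutPartition G 𝒞) (hconn : G.Connected)
    (hgeo : ∀ (u w : V) (p : G.Walk u w), p.length = G.dist u w → ∀ C ∈ 𝒞, cutUse G p C ≤ 1)
    (hC : C ∈ 𝒞) {x y w : V} (hxy : s(x, y) ∈ C) (hyw : (G.deleteEdges C).Reachable y w) :
    G.dist x w = 1 + G.dist y w := by
  classical
  have hCf : C ∈ 𝒞.toFinset := by simpa using hC
  have hxw : ¬ (G.deleteEdges C).Reachable x w := fun h =>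
    (hpart.1 C hC).not_reachable hxy (h.trans hyw.symm)
  rw [hpart.dist_eq_sum hconn hgeo, hpart.dist_eq_sum hconn hgeo, ← Finset.add_sum_erase _ _ hCf,
    ← Finset.add_sum_erase _ _ hCf, if_neg hxw, if_pos hyw, zero_add]
  congr 1
  refine Finset.sum_congr rfl fun D hD => ?_
  obtain ⟨hDC, hD⟩ := Finset.mem_erase.1 hD
  have hxy' : (G.deleteEdges D).Reachable x y := by
    refine SimpleGraph.Adj.reachable ?_
    rw [SimpleGraph.deleteEdges_adj]
    exact ⟨(hpart.1 C hC).1 hxy,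
      fun h => Set.disjoint_left.1 (hpart.2.1 (by simpa using hD) hC hDC) h hxy⟩
  have : (G.deleteEdges D).Reachable x w ↔ (G.deleteEdges D).Reachable y w :=
    ⟨hxy'.symm.trans, hxy'.trans⟩
  simp only [this]

theorem IsCut.gConvex_side (hC : IsCut G C) (hconn : G.Connected)
    (hgeo : ∀ (u w : V) (p : G.Walk u w), p.length = G.dist u w → cutUse G p C ≤ 1) (a : V) :
    GConvex G {y | (G.deleteEdges C).Reachable y a} := by
  intro u hu w hw x hx
  obtain ⟨p, hp⟩ := hconn.exists_walk_length_eq_dist u x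
  obtain ⟨q, hq⟩ := hconn.exists_walk_length_eq_dist x w
  have hle := hgeo u w (p.append q) (by rw [SimpleGraph.Walk.length_append, hp, hq, hx])
  have heven := (hC.even_cutUse_iff (p.append q)).2 (hu.trans (SimpleGraph.Reachable.symm hw))
  rw [cutUse_append] at hle heven
  have hzero : cutUse G p C = 0 := by
    rcases heven with ⟨k, hk⟩
    omega
  have hux := (hC.even_cutUse_iff p).1 (by simp [hzero])
  exact hux.symm.trans hu

/-- A convex set which meets the same sides as the whole graph is the whole graph. -/
theorem IsCutPartition.eq_univ_of_gConvex [Fintype V] (hpart : IsCutPartition G 𝒞)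
    (hconn : G.Connected)
    (hgeo : ∀ (u w : V) (p : G.Walk u w), p.length = G.dist u w → ∀ C ∈ 𝒞, cutUse G p C ≤ 1)
    {K : Set V} (hK : GConvex G K) (hne : K.Nonempty)
    (hmeet : ∀ C ∈ 𝒞, ∀ S, IsSide G C S → (S ∩ K).Nonempty) : K = Set.univ := by
  refine Set.eq_univ_of_forall fun z => ?_
  obtain ⟨k, hk⟩ := hne
  obtain ⟨p⟩ := hconn.preconnected k z
  induction p with
  | nil => exact hk
  | @cons x y z h p ih =>
    refine ih ?_
    have he : s(x, y) ∈ ⋃₀ 𝒞 := by rw [hpart.2.2]; exact h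
    obtain ⟨C, hC, heC⟩ := he
    obtain ⟨w, hwy, hwK⟩ := hmeet C hC _ ⟨y, rfl⟩
    refine hK x hk w hwK y ?_
    rw [hpart.dist_succ hconn hgeo hC heC (SimpleGraph.Reachable.symm hwy),
      SimpleGraph.dist_eq_one_iff_adj.2 h]

theorem subset_gConvexHull (G : SimpleGraph V) (S : Set V) : S ⊆ GConvexHull G S :=
  Set.subset_sInter fun _ hT => hT.2

theorem gConvex_gConvexHull (G : SimpleGraph V) (S : Set V) : GConvex G (GConvexHull G S) :=
  fun u hu w hw x hx T hT => hT.1 u (hu T hT) w (hw T hT) x hx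

theorem gConvexHull_subset {S T : Set V} (hT : GConvex G T) (hST : S ⊆ T) : GConvexHull G S ⊆ T :=
  Set.sInter_subset_of_mem ⟨hT, hST⟩

/-- Hull sets are exactly the nonempty sets meeting both sides of every cut. -/
theorem IsCutPartition.gConvexHull_eq_univ_iff [Fintype V] (hpart : IsCutPartition G 𝒞)
    (hconn : G.Connected)
    (hgeo : ∀ (u w : V) (p : G.Walk u w), p.length = G.dist u w → ∀ C ∈ 𝒞, cutUse G p C ≤ 1)
    {H : Set V} : GConvexHull G H = Set.univ ↔
      H.Nonempty ∧ ∀ C ∈ 𝒞, ∀ S, IsSide G C S → (S ∩ H).Nonempty := by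
  constructor
  · intro hH
    constructor
    · rw [Set.nonempty_iff_ne_empty]
      rintro rfl
      have hsub : GConvexHull G (∅ : Set V) ⊆ ∅ :=
        gConvexHull_subset (fun u hu => hu.elim) subset_rfl
      obtain ⟨v⟩ := hconn.nonempty
      exact hsub (hH ▸ Set.mem_univ v)
    · rintro C hC _ ⟨a, rfl⟩
      by_contra hemp
      have hcut := hpart.1 C hC
      have hHa (x : V) (hx : x ∈ H) : ¬ (G.deleteEdges C).Reachable x a :=
        fun h => hemp ⟨x, h, hx⟩
      obtain ⟨e, he⟩ : C.Nonempty := by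
        rw [Set.nonempty_iff_ne_empty]
        rintro rfl
        exact hcut.2.1 (by simpa using hconn)
      obtain ⟨b, hb⟩ : ∃ b, ∀ x, ¬ (G.deleteEdges C).Reachable x a ↔
          (G.deleteEdges C).Reachable x b := by
        induction e using Sym2.ind with
        | _ c d =>
          have hcd := hcut.not_reachable he
          have hor := hcut.reachable_or he
          rcases hor a with ha | ha
          · refine ⟨d, fun x => ⟨fun hx => ?_, fun hx hxa => ?_⟩⟩
            · exact (hor x).resolve_left fun hxc => hx (hxc.trans ha.symm)
            · exact hcd ((ha.symm.trans hxa.symm).trans hx)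
          · refine ⟨c, fun x => ⟨fun hx => ?_, fun hx hxa => ?_⟩⟩
            · exact (hor x).resolve_right fun hxd => hx (hxd.trans ha.symm)
            · exact hcd ((hx.symm.trans hxa).trans ha)
      have hsub := gConvexHull_subset
        (hcut.gConvex_side hconn (fun u w p hp => hgeo u w p hp C hC) b)
        (fun x hx => (hb x).1 (hHa x hx))
      have hab : (G.deleteEdges C).Reachable a b := hsub (hH ▸ Set.mem_univ a)
      exact (hb a).2 hab .rfl
  · rintro ⟨hne, hmeet⟩
    exact hpart.eq_univ_of_gConvex hconn hgeo (gConvex_gConvexHull G H)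
      (hne.mono (subset_gConvexHull G H))
      fun C hC S hS => (hmeet C hC S hS).mono
        (Set.inter_subset_inter_right S (subset_gConvexHull G H))

end CutUse

/-- The hull number equals one plus the minimum over all vertices `v` of `h_v`. -/
theorem hullNumber_eq_min_oneSidedHitting {V : Type*} [Fintype V] (G : SimpleGraph V)
    (hconn : G.Connected) (𝒞 : Set (Set (Sym2 V))) (hpart : IsCutPartition G 𝒞)
    (hgeo : ∀ (u w : V) (p : G.Walk u w), p.length = G.dist u w →
      ∀ C ∈ 𝒞, cutUse G p C ≤ 1) :
    hullNumber G = (⨅ v : V, oneSidedHitting G 𝒞 v) + 1 := by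
  have hull_iff (H : Set V) := hpart.gConvexHull_eq_univ_iff hconn hgeo (H := H)
  have : Nonempty V := hconn.nonempty
  apply le_antisymm
  · obtain ⟨v, hv⟩ := exists_eq_ciInf_of_finite (f := fun v => oneSidedHitting G 𝒞 v)
    have hmem : oneSidedHitting G 𝒞 v ∈ {n : ℕ | ∃ H : Set V,
        (∀ C ∈ 𝒞, ∀ S : Set V, IsSide G C S → v ∉ S → (S ∩ H).Nonempty) ∧ H.ncard = n} := by
      refine Nat.sInf_mem ⟨_, Set.univ, ?_, rfl⟩
      rintro C - _ ⟨x, rfl⟩ -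
      exact ⟨x, .rfl, trivial⟩
    obtain ⟨H, hH, hcard⟩ := hmem
    rw [← hv, ← hcard]
    refine le_trans (Nat.sInf_le ⟨insert v H, (hull_iff _).2 ⟨Set.insert_nonempty v H, ?_⟩, rfl⟩)
      (Set.ncard_insert_le v H)
    intro C hC S hS
    by_cases hvS : v ∈ S
    · exact ⟨v, hvS, Set.mem_insert v H⟩
    · exact (hH C hC S hS hvS).mono (Set.inter_subset_inter_right S (Set.subset_insert v H))
  · have hmem : hullNumber G ∈ {n : ℕ | ∃ H : Set V, GConvexHull G H = Set.univ ∧ H.ncard = n} :=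
      Nat.sInf_mem ⟨_, Set.univ, Set.univ_subset_iff.1 (subset_gConvexHull G _), rfl⟩
    obtain ⟨H, hH, hcard⟩ := hmem
    obtain ⟨⟨v, hv⟩, hmeet⟩ := (hull_iff H).1 hH
    rw [← hcard, ← Set.ncard_sdiff_singleton_add_one hv]
    have hle : oneSidedHitting G 𝒞 v ≤ (H \ {v}).ncard := by
      refine Nat.sInf_le ⟨H \ {v}, fun C hC S hS hvS => ?_, rfl⟩
      obtain ⟨x, hxS, hxH⟩ := hmeet C hC S hS
      exact ⟨x, hxS, hxH, fun hxv => hvS (hxv ▸ hxS)⟩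
    exact Nat.add_le_add_right ((ciInf_le (OrderBot.bddBelow _) v).trans hle) 1
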